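/- Let n ≥ 6 and 0 < μ, θ < 1. Let H be an n-vertex 3-graph such that deg_H(S) ≥ μ(n−2) for all but at most θ·C(n,2) unordered pairs S of distinct vertices. Then H contains a spanning subgraph H' with e(H \ H') ≤ 48·θ^{1/4}·C(n,3) such that for every pair S of distinct vertices, either deg_{H'}(S) ≥ (μ − 8θ^{1/4})(n−2) or deg_{H'}(S) = 0; moreover, the number of pairs S with deg_{H'}(S) = 0 is at most (θ + θ^{1/4})·C(n,2). -/

import Mathlib

/-!
Call a pair *bad* if its codegree is below `μ (n - 2)`, and put `δ = θ ^ (1/4)`.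

If `8 δ ≥ μ`, the codegree requirement is vacuous and `H' = H` works, since a pair of codegree `0`
is bad. Otherwise `δ < 1/8`. Let `U` be the set of vertices lying in more than `δ² (n - 1)` bad
pairs. Double counting incidences between vertices and bad pairs gives `|U| ≤ δ² n`
(`card_heavy_mul_le`). Delete from `H` every edge which meets `U` or contains a bad pair
(`shave`); this costs at most `|U| C(n-1,2) + θ C(n,2) (n - 2) ≤ 3 (δ² + δ⁴) C(n,3)` edges
(`card_sdiff_shave_le`). Pairs which are bad or meet `U` now have codegree `0`, and there are at most
`θ C(n,2) + |U| (n - 1)` of them. Any other pair `xy` loses at most one edge for each vertex of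
`U` and for each bad pair through `x` or `y` (`pairDeg_le_shave`), so at most
`3 δ² n ≤ 8 δ (n - 2)` edges; its codegree remains positive because `8 δ < μ`.
-/

open Finset

/-- An `n`-vertex 3-graph `H` is `(ρ,d)`-cherry-dense if for all sets of ordered pairs
`G₁, G₂ ⊆ V × V`, the number of cherries `(x,y,z)` with `(x,y) ∈ G₁`, `(y,z) ∈ G₂` and
`{x,y,z} ∈ E(H)` is at least `d·|P₂(G₁,G₂)| − ρn³`. -/
def CherryDense (n : ℕ) (H : Finset (Finset (Fin n))) (ρ d : ℝ) : Prop :=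
  ∀ G₁ G₂ : Finset (Fin n × Fin n),
    ((((Finset.univ : Finset (Fin n × Fin n × Fin n)).filter fun t =>
          (t.1, t.2.1) ∈ G₁ ∧ (t.2.1, t.2.2) ∈ G₂).filter fun t =>
          ({t.1, t.2.1, t.2.2} : Finset (Fin n)) ∈ H).card : ℝ) ≥
      d * (((Finset.univ : Finset (Fin n × Fin n × Fin n)).filter fun t =>
          (t.1, t.2.1) ∈ G₁ ∧ (t.2.1, t.2.2) ∈ G₂).card : ℝ) - ρ * (n : ℝ) ^ 3

/-- The vertex degree `deg_H(v)`: the number of edges of `H` containing `v`. -/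
def vdeg (n : ℕ) (H : Finset (Finset (Fin n))) (v : Fin n) : ℕ :=
  (H.filter fun e => v ∈ e).card

/-- The codegree `deg_H(xy)`: the number of edges of `H` containing both `x` and `y`. -/
def codeg (n : ℕ) (H : Finset (Finset (Fin n))) (x y : Fin n) : ℕ :=
  (H.filter fun e => x ∈ e ∧ y ∈ e).card

/-- The codegree of an (unordered) pair `S`: the number of edges of `H` containing `S`. -/
def pairDeg (n : ℕ) (H : Finset (Finset (Fin n))) (S : Finset (Fin n)) : ℕ :=
  (H.filter fun e => S ⊆ e).card

/-! ### Counting sets that contain a member of a family -/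

/-- Equality holds when `b.card ≤ k`; only the upper bound is used. -/
lemma card_supersets_le (n k : ℕ) (b : Finset (Fin n)) :
    (((univ : Finset (Fin n)).powersetCard k).filter fun e => b ⊆ e).card
      ≤ (n - b.card).choose (k - b.card) := by
  have h : ((univ \ b : Finset (Fin n)).powersetCard (k - b.card)).card
      = (n - b.card).choose (k - b.card) := by
    rw [card_powersetCard, card_sdiff_of_subset (subset_univ b), card_univ, Fintype.card_fin]
  rw [← h]
  refine card_le_card_of_injOn (fun e => e \ b) ?_ ?_
  · intro e he
    simp only [coe_filter, mem_powersetCard, Set.mem_ofPred_eq] at he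
    simp only [mem_coe, mem_powersetCard]
    exact ⟨sdiff_subset_sdiff (subset_univ e) le_rfl,
      by rw [card_sdiff_of_subset he.2, he.1.2]⟩
  · intro e he f hf hef
    simp only [coe_filter, mem_powersetCard, Set.mem_ofPred_eq] at he hf
    rw [← sdiff_union_of_subset he.2, ← sdiff_union_of_subset hf.2]
    exact congrArg (· ∪ b) hef

/-- A family of `k`-sets, each of which contains a member of the `j`-uniform family `F`,
has at most `|F| * C(n - j, k - j)` members. -/
lemma card_le_of_forall_exists_subset {n k j : ℕ} (A F : Finset (Finset (Fin n)))
    (hA : ∀ e ∈ A, e.card = k) (hF : ∀ b ∈ F, b.card = j)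
    (h : ∀ e ∈ A, ∃ b ∈ F, b ⊆ e) :
    A.card ≤ F.card * (n - j).choose (k - j) := by
  calc A.card ≤ (F.biUnion fun b =>
        ((univ : Finset (Fin n)).powersetCard k).filter fun e => b ⊆ e).card := by
        refine card_le_card fun e he => ?_
        obtain ⟨b, hb, hbe⟩ := h e he
        simp only [mem_biUnion, mem_filter, mem_powersetCard]
        exact ⟨b, hb, ⟨subset_univ e, hA e he⟩, hbe⟩
    _ ≤ _ := by
        refine card_biUnion_le_card_mul _ _ _ fun b hb => ?_
        have := card_supersets_le n k b
        rwa [hF b hb] at this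

/-! ### Vertices in many bad pairs -/

/-- Vertices lying in more than `c` members of `B`. -/
noncomputable def heavy {n : ℕ} (B : Finset (Finset (Fin n))) (c : ℝ) : Finset (Fin n) :=
  univ.filter fun x => c < ((B.filter fun b => x ∈ b).card : ℝ)

lemma card_heavy_mul_le {n : ℕ} (B : Finset (Finset (Fin n))) (hB : ∀ b ∈ B, b.card = 2)
    (c : ℝ) : ((heavy B c).card : ℝ) * c ≤ 2 * (B.card : ℝ) := by
  have h1 : ∑ x : Fin n, (B.filter fun b => x ∈ b).card = 2 * B.card := by
    have := sum_card_bipartiteAbove_eq_sum_card_bipartiteBelow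
      (s := (univ : Finset (Fin n))) (t := B) (fun x b => x ∈ b)
    simp only [bipartiteAbove, bipartiteBelow] at this
    rw [this, sum_congr rfl (g := fun _ => 2)]
    · simp [mul_comm]
    · intro b hb
      simpa using hB b hb
  calc ((heavy B c).card : ℝ) * c = ∑ x ∈ heavy B c, c := by simp
    _ ≤ ∑ x ∈ heavy B c, ((B.filter fun b => x ∈ b).card : ℝ) :=
        sum_le_sum fun x hx => (mem_filter.1 hx).2.le
    _ ≤ ∑ x : Fin n, ((B.filter fun b => x ∈ b).card : ℝ) :=
        sum_le_sum_of_subset_of_nonneg (subset_univ _) fun _ _ _ => by positivity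
    _ = 2 * (B.card : ℝ) := by exact_mod_cast h1

/-! ### Deleting edges through heavy vertices and bad pairs -/

/-- The edges of `H` which avoid the vertex set `U` and contain no member of `B`. -/
def shave {n : ℕ} (H B : Finset (Finset (Fin n))) (U : Finset (Fin n)) :
    Finset (Finset (Fin n)) :=
  H.filter fun e => (∀ u ∈ U, u ∉ e) ∧ ∀ b ∈ B, ¬ b ⊆ e

lemma mem_sdiff_shave {n : ℕ} {H B : Finset (Finset (Fin n))} {U : Finset (Fin n)}
    {e : Finset (Fin n)} :
    e ∈ H \ shave H B U ↔ e ∈ H ∧ ((∃ u ∈ U, u ∈ e) ∨ ∃ b ∈ B, b ⊆ e) := by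
  simp only [shave, mem_sdiff, mem_filter, not_and_or]
  push Not
  exact ⟨fun ⟨h, h'⟩ => ⟨h, h'.resolve_left (not_not_intro h)⟩, fun ⟨h, h'⟩ => ⟨h, Or.inr h'⟩⟩

lemma pairDeg_shave_eq_zero {n : ℕ} (H B : Finset (Finset (Fin n))) (U : Finset (Fin n))
    (S : Finset (Fin n)) (h : S ∈ B ∨ ∃ u ∈ U, u ∈ S) :
    pairDeg n (shave H B U) S = 0 := by
  simp only [pairDeg, shave, card_eq_zero, filter_eq_empty_iff, mem_filter]
  rintro e ⟨-, hU, hB⟩ hS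
  rcases h with h | ⟨u, hu, huS⟩
  · exact hB S h hS
  · exact hU u hu (hS huS)

lemma card_sdiff_shave_le {n : ℕ} (H B : Finset (Finset (Fin n))) (U : Finset (Fin n))
    (h3 : ∀ e ∈ H, e.card = 3) (hB : ∀ b ∈ B, b.card = 2) :
    (H \ shave H B U).card ≤ U.card * (n - 1).choose 2 + B.card * (n - 2) := by
  have hsub : H \ shave H B U ⊆
      (H.filter fun e => ∃ u ∈ U, u ∈ e) ∪ H.filter fun e => ∃ b ∈ B, b ⊆ e := by
    intro e he
    rw [mem_sdiff_shave] at he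
    simp only [mem_union, mem_filter]
    exact he.2.imp (And.intro he.1) (And.intro he.1)
  refine (card_le_card hsub).trans ((card_union_le _ _).trans (add_le_add ?_ ?_))
  · have := card_le_of_forall_exists_subset (k := 3) (j := 1)
      (H.filter fun e => ∃ u ∈ U, u ∈ e) (U.image fun u => {u})
      (fun e he => h3 e (mem_filter.1 he).1)
      (by simp) (by
        intro e he
        obtain ⟨-, u, hu, hue⟩ := mem_filter.1 he
        exact ⟨{u}, mem_image_of_mem _ hu, by simpa using hue⟩)
    exact this.trans (Nat.mul_le_mul_right _ card_image_le)
  · have := card_le_of_forall_exists_subset (k := 3) (j := 2)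
      (H.filter fun e => ∃ b ∈ B, b ⊆ e) B
      (fun e he => h3 e (mem_filter.1 he).1) hB (fun e he => (mem_filter.1 he).2)
    simpa using this

/-- With `B` the bad pairs, a good pair `xy` avoiding `U` determines each lost edge together with a vertex of `U` or a
bad pair: two distinct pairs inside a triple meet, and their union is that triple. -/
lemma pairDeg_le_shave {n : ℕ} (H B : Finset (Finset (Fin n))) (U : Finset (Fin n))
    (h3 : ∀ e ∈ H, e.card = 3) (hB : ∀ b ∈ B, b.card = 2) {x y : Fin n} (hxy : x ≠ y)
    (hS : ({x, y} : Finset (Fin n)) ∉ B) (hx : x ∉ U) (hy : y ∉ U) :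
    pairDeg n H {x, y} ≤ pairDeg n (shave H B U) {x, y} +
      (U.card + ((B.filter fun b => x ∈ b).card + (B.filter fun b => y ∈ b).card)) := by
  set S : Finset (Fin n) := {x, y} with hSdef
  have hS2 : S.card = 2 := card_pair hxy
  have hsub : (H.filter fun e => S ⊆ e) ⊆ ((shave H B U).filter fun e => S ⊆ e) ∪
      (U.image (fun u => insert u S) ∪ (((B.filter fun b => x ∈ b).image fun b => b ∪ S) ∪
        (B.filter fun b => y ∈ b).image fun b => b ∪ S)) := by
    intro e he
    obtain ⟨heH, hSe⟩ := mem_filter.1 he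
    have he3 := h3 e heH
    by_cases hes : e ∈ shave H B U
    · exact mem_union_left _ (mem_filter.2 ⟨hes, hSe⟩)
    refine mem_union_right _ ?_
    rcases (mem_sdiff_shave.1 (mem_sdiff.2 ⟨heH, hes⟩)).2 with ⟨u, hu, hue⟩ | ⟨b, hb, hbe⟩
    · refine mem_union_left _ (mem_image.2 ⟨u, hu, ?_⟩)
      have huS : u ∉ S := by
        rw [hSdef, mem_insert, mem_singleton]
        rintro (rfl | rfl)
        · exact hx hu
        · exact hy hu
      refine eq_of_subset_of_card_le (insert_subset hue hSe) ?_
      rw [card_insert_of_notMem huS]; omega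
    · refine mem_union_right _ ?_
      have hb2 := hB b hb
      have hbSe : b ∪ S ⊆ e := union_subset hbe hSe
      have hne : b ≠ S := fun h => hS (h ▸ hb)
      have heq : b ∪ S = e := by
        refine eq_of_subset_of_card_le hbSe ?_
        by_contra hlt
        have h1 : b = b ∪ S := eq_of_subset_of_card_le subset_union_left (by omega)
        have h2 : S = b ∪ S := eq_of_subset_of_card_le subset_union_right (by omega)
        exact hne (h1.trans h2.symm)
      have hmeet : x ∈ b ∨ y ∈ b := by
        by_contra hcon
        have hd : Disjoint b S := by
          rw [hSdef, disjoint_insert_right, disjoint_singleton_right]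
          tauto
        have := card_union_of_disjoint hd
        rw [heq] at this
        omega
      rcases hmeet with h | h
      · exact mem_union_left _ (mem_image.2 ⟨b, mem_filter.2 ⟨hb, h⟩, heq⟩)
      · exact mem_union_right _ (mem_image.2 ⟨b, mem_filter.2 ⟨hb, h⟩, heq⟩)
  unfold pairDeg
  refine (card_le_card hsub).trans ((card_union_le _ _).trans (Nat.add_le_add_left ?_ _))
  refine (card_union_le _ _).trans (add_le_add card_image_le ?_)
  exact (card_union_le _ _).trans (add_le_add card_image_le card_image_le)

/-! ### The shaving lemma -/

lemma cast_choose_three {n : ℕ} (hn : 6 ≤ n) :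
    (n.choose 3 : ℝ) = n * (n - 1) * (n - 2) / 6 := by
  obtain ⟨m, rfl⟩ : ∃ m, n = m + 1 := ⟨n - 1, by omega⟩
  have h : ((m : ℝ) + 1) * (m.choose 2 : ℝ) = ((m + 1).choose 3 : ℝ) * 3 := by
    exact_mod_cast Nat.add_one_mul_choose_eq m 2
  rw [Nat.cast_choose_two] at h
  push_cast
  linarith

/-- Shaving lemma: if all but at most `θ·C(n,2)` pairs `S` satisfy `deg_H(S) ≥ μ(n−2)`,
then `H` has a spanning subgraph `H'` losing at most `48θ^{1/4}·C(n,3)` edges, in which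
every pair has codegree either `≥ (μ − 8θ^{1/4})(n−2)` or `0`, and at most
`(θ + θ^{1/4})·C(n,2)` pairs have codegree `0`. -/
theorem stmt_2 (n : ℕ) (hn : 6 ≤ n) (μ θ : ℝ) (hμ0 : 0 < μ) (hμ1 : μ < 1)
    (hθ0 : 0 < θ) (hθ1 : θ < 1) (H : Finset (Finset (Fin n)))
    (h3 : ∀ e ∈ H, e.card = 3)
    (hdeg : ((((Finset.univ : Finset (Fin n)).powersetCard 2).filter fun S =>
        (pairDeg n H S : ℝ) < μ * ((n : ℝ) - 2)).card : ℝ) ≤ θ * (n.choose 2 : ℝ)) :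
    ∃ H' : Finset (Finset (Fin n)), H' ⊆ H ∧
      (((H \ H').card : ℝ) ≤ 48 * θ ^ ((1 : ℝ) / 4) * (n.choose 3 : ℝ)) ∧
      (∀ S ∈ (Finset.univ : Finset (Fin n)).powersetCard 2,
        (μ - 8 * θ ^ ((1 : ℝ) / 4)) * ((n : ℝ) - 2) ≤ (pairDeg n H' S : ℝ) ∨
          pairDeg n H' S = 0) ∧
      ((((Finset.univ : Finset (Fin n)).powersetCard 2).filter fun S =>
          pairDeg n H' S = 0).card : ℝ) ≤ (θ + θ ^ ((1 : ℝ) / 4)) * (n.choose 2 : ℝ) := by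
  set δ : ℝ := θ ^ ((1 : ℝ) / 4) with hδ
  have hδ0 : 0 < δ := Real.rpow_pos_of_pos hθ0 _
  have hδ4 : δ ^ 4 = θ := by
    rw [hδ, ← Real.rpow_natCast, ← Real.rpow_mul hθ0.le]
    norm_num
  have hn6 : (6 : ℝ) ≤ n := by exact_mod_cast hn
  set B := ((univ : Finset (Fin n)).powersetCard 2).filter fun S =>
    (pairDeg n H S : ℝ) < μ * ((n : ℝ) - 2) with hBdef
  have hB2 : ∀ b ∈ B, b.card = 2 := fun b hb => (mem_powersetCard.1 (mem_filter.1 hb).1).2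
  have hc2 : (n.choose 2 : ℝ) = n * (n - 1) / 2 := Nat.cast_choose_two ℝ n
  have hc2pos : (0 : ℝ) < n.choose 2 := by exact_mod_cast Nat.choose_pos (by omega)
  by_cases hbig : μ ≤ 8 * δ
  · refine ⟨H, Subset.rfl, by simp; positivity, fun S _ => Or.inl ?_, ?_⟩
    · have h1 : (μ - 8 * δ) * ((n : ℝ) - 2) ≤ 0 :=
        mul_nonpos_of_nonpos_of_nonneg (by linarith) (by linarith)
      exact h1.trans (Nat.cast_nonneg _)
    · have hsub : (((univ : Finset (Fin n)).powersetCard 2).filter fun S =>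
          pairDeg n H S = 0) ⊆ B := by
        intro S hS
        obtain ⟨hS1, hS2⟩ := mem_filter.1 hS
        refine mem_filter.2 ⟨hS1, ?_⟩
        rw [hS2]
        exact_mod_cast mul_pos hμ0 (by linarith : (0 : ℝ) < n - 2)
      have h1 : ((((univ : Finset (Fin n)).powersetCard 2).filter fun S =>
          pairDeg n H S = 0).card : ℝ) ≤ B.card := by exact_mod_cast card_le_card hsub
      nlinarith [mul_pos hδ0 hc2pos]
  push Not at hbig
  have hδ8 : δ < 1 / 8 := by linarith
  have hδsq : δ ^ 2 ≤ δ / 8 := by nlinarith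
  have hθδ : θ ≤ δ := by
    have : δ ^ 4 = δ ^ 2 * δ ^ 2 := by ring
    nlinarith [sq_nonneg δ]
  set U := heavy B (δ ^ 2 * ((n : ℝ) - 1)) with hUdef
  have hU : (U.card : ℝ) ≤ δ ^ 2 * n := by
    have h1 := card_heavy_mul_le B hB2 (δ ^ 2 * ((n : ℝ) - 1))
    have hpos : 0 < δ ^ 2 * ((n : ℝ) - 1) := by
      have : (0 : ℝ) < n - 1 := by linarith
      positivity
    refine le_of_mul_le_mul_right ?_ hpos
    calc (U.card : ℝ) * (δ ^ 2 * ((n : ℝ) - 1)) ≤ 2 * B.card := h1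
      _ ≤ 2 * (θ * n.choose 2) := by linarith
      _ = δ ^ 2 * n * (δ ^ 2 * ((n : ℝ) - 1)) := by rw [hc2, ← hδ4]; ring
  have hgood : ∀ S ∈ (univ : Finset (Fin n)).powersetCard 2,
      ¬ (S ∈ B ∨ ∃ u ∈ U, u ∈ S) →
      (μ - 8 * δ) * ((n : ℝ) - 2) ≤ (pairDeg n (shave H B U) S : ℝ) := by
    intro S hS hSgood
    push Not at hSgood
    obtain ⟨hSB, hSU⟩ := hSgood
    have hSdeg : μ * ((n : ℝ) - 2) ≤ pairDeg n H S := by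
      by_contra hlt
      exact hSB (mem_filter.2 ⟨hS, not_le.1 hlt⟩)
    obtain ⟨x, y, hxy, rfl⟩ := card_eq_two.1 (mem_powersetCard.1 hS).2
    have hxU : x ∉ U := fun h => hSU x h (by simp)
    have hyU : y ∉ U := fun h => hSU y h (by simp)
    have hlight : ∀ z, z ∉ U →
        ((B.filter fun b => z ∈ b).card : ℝ) ≤ δ ^ 2 * ((n : ℝ) - 1) := fun z hz =>
      not_lt.1 fun h => hz (mem_filter.2 ⟨mem_univ z, h⟩)
    have hloss : (pairDeg n H {x, y} : ℝ) ≤ pairDeg n (shave H B U) {x, y} +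
        (U.card + ((B.filter fun b => x ∈ b).card + (B.filter fun b => y ∈ b).card)) := by
      exact_mod_cast pairDeg_le_shave H B U h3 hB2 hxy hSB hxU hyU
    have hdx := hlight x hxU
    have hdy := hlight y hyU
    have h3n : δ ^ 2 * (3 * n) ≤ δ / 8 * (3 * n) :=
      mul_le_mul_of_nonneg_right hδsq (by positivity)
    nlinarith [sq_nonneg δ, mul_le_mul_of_nonneg_left hn6 hδ0.le]
  refine ⟨shave H B U, filter_subset _ _, ?_, fun S hS => ?_, ?_⟩
  · have h1 : ((H \ shave H B U).card : ℝ) ≤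
        U.card * ((n - 1).choose 2 : ℕ) + B.card * ((n - 2 : ℕ) : ℝ) := by
      exact_mod_cast card_sdiff_shave_le H B U h3 hB2
    rw [Nat.cast_choose_two, Nat.cast_sub (by omega), Nat.cast_sub (by omega)] at h1
    push_cast at h1
    set N : ℝ := n * (n - 1) * (n - 2) with hN
    have hNpos : 0 < N := by
      have h1 : (0 : ℝ) < n - 1 := by linarith
      have h2 : (0 : ℝ) < n - 2 := by linarith
      positivity
    have hA : (U.card : ℝ) * (((n : ℝ) - 1) * ((n : ℝ) - 1 - 1) / 2) ≤ δ ^ 2 * N / 2 := by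
      calc _ ≤ δ ^ 2 * n * (((n : ℝ) - 1) * ((n : ℝ) - 1 - 1) / 2) :=
            mul_le_mul_of_nonneg_right hU
              (div_nonneg (mul_nonneg (by linarith) (by linarith)) (by norm_num))
        _ = _ := by rw [hN]; ring
    have hC : (B.card : ℝ) * ((n : ℝ) - 2) ≤ θ * N / 2 := by
      calc _ ≤ θ * n.choose 2 * ((n : ℝ) - 2) :=
            mul_le_mul_of_nonneg_right hdeg (by linarith)
        _ = _ := by rw [hN, hc2]; ring
    rw [cast_choose_three hn, ← hN]
    have h2 := mul_le_mul_of_nonneg_right hδsq hNpos.le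
    have h3' := mul_le_mul_of_nonneg_right hθδ hNpos.le
    nlinarith [mul_pos hδ0 hNpos]
  · by_cases h : S ∈ B ∨ ∃ u ∈ U, u ∈ S
    · exact Or.inr (pairDeg_shave_eq_zero H B U S h)
    · exact Or.inl (hgood S hS h)
  · set P := (univ : Finset (Fin n)).powersetCard 2 with hP
    -- A pair of codegree `0` is bad or meets `U`, since `(μ - 8 δ) (n - 2) > 0`.
    have hsub : (P.filter fun S => pairDeg n (shave H B U) S = 0) ⊆
        B ∪ P.filter fun S => ∃ u ∈ U, u ∈ S := by
      intro S hS
      obtain ⟨hSP, hS0⟩ := mem_filter.1 hS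
      by_contra hcon
      have h := hgood S hSP (by
        simp only [mem_union, mem_filter] at hcon
        exact fun h => hcon (h.imp_right (And.intro hSP)))
      rw [hS0] at h
      have : 0 < (μ - 8 * δ) * ((n : ℝ) - 2) := mul_pos (by linarith) (by linarith)
      push_cast at h
      linarith
    have hmeet : (P.filter fun S => ∃ u ∈ U, u ∈ S).card ≤ U.card * (n - 1) := by
      have := card_le_of_forall_exists_subset (k := 2) (j := 1)
        (P.filter fun S => ∃ u ∈ U, u ∈ S) (U.image fun u => {u})
        (fun e he => (mem_powersetCard.1 (mem_filter.1 he).1).2)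
        (by simp) (by
          intro e he
          obtain ⟨-, u, hu, hue⟩ := mem_filter.1 he
          exact ⟨{u}, mem_image_of_mem _ hu, by simpa using hue⟩)
      rw [Nat.choose_one_right] at this
      exact this.trans (Nat.mul_le_mul_right _ card_image_le)
    have h1 : ((P.filter fun S => pairDeg n (shave H B U) S = 0).card : ℝ) ≤
        B.card + U.card * ((n - 1 : ℕ) : ℝ) := by
      exact_mod_cast (card_le_card hsub).trans
        ((card_union_le _ _).trans (Nat.add_le_add_left hmeet _))
    rw [Nat.cast_sub (by omega), Nat.cast_one] at h1
    have h2 : (U.card : ℝ) * ((n : ℝ) - 1) ≤ 2 * δ ^ 2 * n.choose 2 := by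
      calc _ ≤ δ ^ 2 * n * ((n : ℝ) - 1) := mul_le_mul_of_nonneg_right hU (by linarith)
        _ = _ := by rw [hc2]; ring
    have h4 := mul_le_mul_of_nonneg_right hδsq hc2pos.le
    nlinarith [mul_pos hδ0 hc2pos]
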